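/- Let G be a basic CUH graph that omits D and in which at least one color class does not form an independent set, and let M_R be a maximal red clique and M_B a maximal blue clique. If ω_R > 1, there is a partition M_R = R1 ∪ R2 into two non-empty parts such that for every b ∈ M_B the set of neighbors of b in M_R equals R1 or R2. If additionally ω_B > 1, there exist partitions M_R = R1 ∪ R2 and M_B = B1 ∪ B2 into non-empty parts such that the set of cross edges in G[M_R ∪ M_B] is exactly (R1 × B1) ∪ (R2 × B2). -/

import Mathlib

open SimpleGraph

/-- A partial colored isomorphism of the 2-colored graph `(G, red)`, defined on the set `S`:
an injective map preserving colors and adjacency on `S`. -/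
def IsPartialIso {V : Type} (G : SimpleGraph V) (red : V → Prop) (S : Set V) (f : V → V) :
    Prop :=
  Set.InjOn f S ∧ (∀ v ∈ S, (red (f v) ↔ red v)) ∧
    ∀ u ∈ S, ∀ v ∈ S, (G.Adj (f u) (f v) ↔ G.Adj u v)

/-- A 2-colored graph is ultrahomogeneous if every isomorphism between two finite induced
colored subgraphs extends to a color-preserving automorphism. -/
def Ultrahomogeneous {V : Type} (G : SimpleGraph V) (red : V → Prop) : Prop :=
  ∀ S : Set V, S.Finite → ∀ f : V → V, IsPartialIso G red S f →
    ∃ ψ : G ≃g G, (∀ v, red (ψ v) ↔ red v) ∧ ∀ v ∈ S, ψ v = f v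

/-- The set `P` induces a disjoint union of cliques in `G` (no induced monochromatic `P₃`). -/
def IsUnionOfCliques {V : Type} (G : SimpleGraph V) (P : Set V) : Prop :=
  ∀ u ∈ P, ∀ v ∈ P, ∀ w ∈ P, G.Adj u v → G.Adj v w → u ≠ w → G.Adj u w

/-- `M` is an inclusion-wise maximal clique of the subgraph of `G` induced on `P`. -/
def IsMaxCliqueIn {V : Type} (G : SimpleGraph V) (P : Set V) (M : Set V) : Prop :=
  M ⊆ P ∧ G.IsClique M ∧ ∀ M' : Set V, M' ⊆ P → G.IsClique M' → M ⊆ M' → M = M'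

/-- `S` is an independent set in `G`. -/
def IsIndepIn {V : Type} (G : SimpleGraph V) (S : Set V) : Prop :=
  ∀ u ∈ S, ∀ v ∈ S, ¬ G.Adj u v

/-- The 2-colored graph `(H, redH)` is realized in `(G, red)`, i.e. isomorphic to an
induced colored subgraph of `G`. -/
def Realizes {V : Type} (G : SimpleGraph V) (red : V → Prop) {W : Type} (H : SimpleGraph W)
    (redH : W → Prop) : Prop :=
  ∃ f : W → V, Function.Injective f ∧ (∀ w, red (f w) ↔ redH w) ∧
    ∀ u w : W, G.Adj (f u) (f w) ↔ H.Adj u w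

/-- `(H, redH)` is minimally omitted in `(G, red)`: it is omitted, but every proper induced
subgraph of it is realized. -/
def MinOmitted {V : Type} (G : SimpleGraph V) (red : V → Prop) {W : Type} (H : SimpleGraph W)
    (redH : W → Prop) : Prop :=
  ¬ Realizes G red H redH ∧
    ∀ S : Set W, S ≠ Set.univ → Realizes G red (H.induce S) (fun x => redH x.1)

/-- Isomorphism of 2-colored graphs. -/
def ColoredIso {V : Type} (G : SimpleGraph V) (red : V → Prop) {W : Type} (H : SimpleGraph W)
    (redH : W → Prop) : Prop :=
  ∃ e : G ≃g H, ∀ v, red v ↔ redH (e v)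

/-- The graph obtained from `G` by complementing the cross edges while keeping the
edges inside each color class. -/
def crossComp {V : Type} (G : SimpleGraph V) (red : V → Prop) : SimpleGraph V :=
  SimpleGraph.fromRel (fun u v =>
    ((red u ↔ red v) ∧ G.Adj u v) ∨ (¬ (red u ↔ red v) ∧ ¬ G.Adj u v))

/-- The blow-up of the 2-colored graph `(H, redH)` (whose red class should be independent),
replacing every red vertex by a copy of `I` forming a clique, joined to the neighbors of the
original vertex. -/
def blowUp {V : Type} (H : SimpleGraph V) (redH : V → Prop) (I : Type) :
    SimpleGraph ({v : V // redH v} × I ⊕ {v : V // ¬ redH v}) :=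
  SimpleGraph.fromRel (fun x y =>
    match x, y with
    | Sum.inl (u, i), Sum.inl (u', i') => H.Adj u.1 u'.1 ∨ (u = u' ∧ i ≠ i')
    | Sum.inl (u, _), Sum.inr b => H.Adj u.1 b.1
    | Sum.inr b, Sum.inl (u, _) => H.Adj b.1 u.1
    | Sum.inr b, Sum.inr b' => H.Adj b.1 b'.1)

/-- The coloring of the blow-up: all vertices replacing red vertices are red. -/
def blowUpRed (V : Type) (redH : V → Prop) (I : Type) :
    ({v : V // redH v} × I ⊕ {v : V // ¬ redH v}) → Prop :=
  Sum.elim (fun _ => True) (fun _ => False)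

/-- `(G, red)` is a blow-up with the red class blown up: it is isomorphic (as a colored graph)
to the blow-up of some `(H, redH)` with independent red class by an `i`-clique, `2 ≤ i ≤ ℵ₀`. -/
def IsBlowUpOf {V : Type} (G : SimpleGraph V) (red : V → Prop) : Prop :=
  ∃ (U : Type) (H : SimpleGraph U) (redH : U → Prop) (I : Type),
    (∀ u v : U, redH u → redH v → ¬ H.Adj u v) ∧
    2 ≤ Cardinal.mk I ∧ Cardinal.mk I ≤ Cardinal.aleph0 ∧
    ∃ e : G ≃g blowUp H redH I, ∀ v, red v ↔ blowUpRed U redH I (e v)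

/-- `(G, red)` is a blow-up (of one of its two color classes). -/
def IsBlowUp {V : Type} (G : SimpleGraph V) (red : V → Prop) : Prop :=
  IsBlowUpOf G red ∨ IsBlowUpOf G (fun v => ¬ red v)

/-- A CUH graph: a countably infinite ultrahomogeneous 2-colored graph in which both
color classes induce disjoint unions of cliques. -/
def IsCUH {V : Type} (G : SimpleGraph V) (red : V → Prop) : Prop :=
  Countable V ∧ Infinite V ∧ Ultrahomogeneous G red ∧
    IsUnionOfCliques G {v | red v} ∧ IsUnionOfCliques G {v | ¬ red v}

/-- A basic CUH graph: a CUH graph which is not a blow-up and where both independence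
numbers are at least 2. -/
def IsBasicCUH {V : Type} (G : SimpleGraph V) (red : V → Prop) : Prop :=
  IsCUH G red ∧ ¬ IsBlowUp G red ∧
    (∃ u v, red u ∧ red v ∧ u ≠ v ∧ ¬ G.Adj u v) ∧
    (∃ u v, ¬ red u ∧ ¬ red v ∧ u ≠ v ∧ ¬ G.Adj u v)

/-- The graph `D`: red vertices `0, 1`, blue vertices `2, 3`, edges
`{01, 23, 02, 03, 12}` (a 2-colored diamond). -/
def Dgraph : SimpleGraph (Fin 4) :=
  SimpleGraph.fromRel (fun x y =>
    (x = 0 ∧ y = 1) ∨ (x = 2 ∧ y = 3) ∨ (x = 0 ∧ y = 2) ∨ (x = 0 ∧ y = 3) ∨ (x = 1 ∧ y = 2))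

/-- The coloring of `D` and `D̃`: `0, 1` are red, `2, 3` are blue. -/
def Dred : Fin 4 → Prop := fun x => x = 0 ∨ x = 1

/-- The graph `D̃`, the cross-edge complement of `D`: the path `0 – 1 – 3 – 2`. -/
def Dtilde : SimpleGraph (Fin 4) :=
  SimpleGraph.fromRel (fun x y => (x = 0 ∧ y = 1) ∨ (x = 1 ∧ y = 3) ∨ (x = 3 ∧ y = 2))

/-- `T_r`: the triangle with two red vertices and one blue vertex. -/
def Tr : SimpleGraph (Fin 3) := ⊤

/-- The coloring of `T_r` and `T̃_r`: `0, 1` red, `2` blue. -/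
def TrRed : Fin 3 → Prop := fun x => x = 0 ∨ x = 1

/-- `T̃_r`: a red edge together with an isolated blue vertex. -/
def TrTilde : SimpleGraph (Fin 3) := SimpleGraph.fromRel (fun x y => x = 0 ∧ y = 1)

/-- `T_b`: the triangle with one red vertex and two blue vertices. -/
def Tb : SimpleGraph (Fin 3) := ⊤

/-- The coloring of `T_b` and `T̃_b`: `0` red, `1, 2` blue. -/
def TbRed : Fin 3 → Prop := fun x => x = 0

/-- `T̃_b`: a blue edge together with an isolated red vertex. -/
def TbTilde : SimpleGraph (Fin 3) := SimpleGraph.fromRel (fun x y => x = 1 ∧ y = 2)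

/-!
In a homogeneous graph that is not a blow-up, every red vertex `u` has, for every blue vertex `b`,
a red neighbor on which adjacency to `b` takes the other value: otherwise no blue vertex would
distinguish the vertices of a red clique, and the red cliques, permuted transitively by
automorphisms, could be contracted.

Let `b`, `c` lie in one blue clique and let `r` in the red clique `M` distinguish them. Omitting
`D` says that a common neighbor of `b` and `c` in `M` forces `b` and `c` to agree on `M`, so there
is none. It remains to exclude an `a` in `M` adjacent to neither. Such an `a` has a neighbor in
the blue clique, which therefore contains a triangle. Using two red cliques, homogeneity then
yields a red vertex adjacent to both ends of some blue edge, and moving it next to `a` gives a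
common neighbor of `b` and `c` in `M`, a contradiction. So any two vertices of a blue clique have
equal or complementary neighborhoods in `M`.
-/

variable {V : Type} {G : SimpleGraph V} {red : V → Prop}

lemma ne_of_red_of_not_red {u b : V} (hu : red u) (hb : ¬ red b) : u ≠ b :=
  fun h => hb (h ▸ hu)

lemma Ultrahomogeneous.swap_colors (hH : Ultrahomogeneous G red) :
    Ultrahomogeneous G (fun v => ¬ red v) := by
  intro S hS f ⟨hinj, hred, hadj⟩
  obtain ⟨ψ, hψ, hψS⟩ := hH S hS f ⟨hinj, fun v hv => not_iff_not.mp (hred v hv), hadj⟩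
  exact ⟨ψ, fun v => not_congr (hψ v), hψS⟩

lemma Ultrahomogeneous.exists_iso_apply_eq {ι : Type*} [Finite ι] [LinearOrder ι]
    (hH : Ultrahomogeneous G red) (x y : ι → V) (heq : ∀ i j, i < j → (y i = y j ↔ x i = x j))
    (hred : ∀ i, red (y i) ↔ red (x i))
    (hadj : ∀ i j, i < j → (G.Adj (y i) (y j) ↔ G.Adj (x i) (x j))) :
    ∃ ψ : G ≃g G, (∀ v, red (ψ v) ↔ red v) ∧ ∀ i, ψ (x i) = y i := by
  have heq (i j : ι) : y i = y j ↔ x i = x j := by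
    rcases lt_trichotomy i j with h | rfl | h
    · exact heq i j h
    · exact iff_of_true rfl rfl
    · rw [eq_comm, heq j i h, eq_comm]
  have hadj (i j : ι) : G.Adj (y i) (y j) ↔ G.Adj (x i) (x j) := by
    rcases lt_trichotomy i j with h | rfl | h
    · exact hadj i j h
    · exact iff_of_false G.irrefl G.irrefl
    · rw [adj_comm, hadj j i h, adj_comm]
  have hf : ∀ i, Function.extend x y id (x i) = y i :=
    Function.FactorsThrough.extend_apply (fun i j => (heq i j).2) id
  obtain ⟨ψ, hψ, hψx⟩ := hH (Set.range x) (Set.finite_range x) (Function.extend x y id) <| by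
    refine ⟨?_, ?_, ?_⟩
    · rintro _ ⟨i, rfl⟩ _ ⟨j, rfl⟩ hij
      rwa [hf, hf, heq] at hij
    · rintro _ ⟨i, rfl⟩
      rw [hf, hred]
    · rintro _ ⟨i, rfl⟩ _ ⟨j, rfl⟩
      rw [hf, hf, hadj]
  exact ⟨ψ, hψ, fun i => (hψx (x i) ⟨i, rfl⟩).trans (hf i)⟩

lemma IsUnionOfCliques.eq_or_adj_trans {P : Set V} (hP : IsUnionOfCliques G P) {u v w : V}
    (hu : u ∈ P) (hv : v ∈ P) (hw : w ∈ P) (huv : u = v ∨ G.Adj u v) (hvw : v = w ∨ G.Adj v w) :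
    u = w ∨ G.Adj u w := by
  rcases huv with rfl | huv
  · exact hvw
  rcases hvw with rfl | hvw
  · exact Or.inr huv
  exact or_iff_not_imp_left.2 (hP u hu v hv w hw huv hvw)

lemma IsMaxCliqueIn.mem_of_adj {P M : Set V} (hM : IsMaxCliqueIn G P M)
    (hP : IsUnionOfCliques G P) {u v : V} (hu : u ∈ M) (hv : v ∈ P) (huv : G.Adj u v) :
    v ∈ M := by
  obtain ⟨hMP, hclique, hmax⟩ := hM
  have hinsert : G.IsClique (insert v M) := by
    refine hclique.insert fun w hw hvw => ?_
    have huw : u = w ∨ G.Adj u w := or_iff_not_imp_left.2 (hclique hu hw)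
    exact (hP.eq_or_adj_trans hv (hMP hu) (hMP hw) (Or.inr huv.symm) huw).resolve_left hvw
  rw [hmax _ (Set.insert_subset hv hMP) hinsert (Set.subset_insert v M)]
  exact Set.mem_insert v M

lemma IsMaxCliqueIn.nonempty {P M : Set V} (hM : IsMaxCliqueIn G P M) (hP : P.Nonempty) :
    M.Nonempty := by
  obtain ⟨p, hp⟩ := hP
  by_contra hempty
  rw [Set.not_nonempty_iff_eq_empty] at hempty
  subst hempty
  exact Set.singleton_ne_empty p (hM.2.2 {p} (by simpa using hp) (by simp) (by simp)).symm

/-! ### Blow-ups -/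

lemma blowUp_adj_inl_inl {H : SimpleGraph V} {I : Type}
    (hind : ∀ u v, red u → red v → ¬ H.Adj u v) (x y : {v // red v} × I) :
    (blowUp H red I).Adj (Sum.inl x) (Sum.inl y) ↔ x.1 = y.1 ∧ x ≠ y := by
  simp only [blowUp, fromRel_adj, hind _ _ x.1.2 y.1.2, hind _ _ y.1.2 x.1.2, false_or]
  grind

lemma blowUp_adj_inl_inr (H : SimpleGraph V) {I : Type} (x : {v // red v} × I)
    (b : {v // ¬ red v}) :
    (blowUp H red I).Adj (Sum.inl x) (Sum.inr b) ↔ H.Adj x.1 b := by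
  simp [blowUp, H.adj_comm b]

lemma blowUp_adj_inr_inr (H : SimpleGraph V) (I : Type) (b c : {v // ¬ red v}) :
    (blowUp H red I).Adj (Sum.inr b) (Sum.inr c) ↔ H.Adj b c := by
  simp only [blowUp, fromRel_adj, H.adj_comm c, or_self, and_iff_right_iff_imp]
  exact fun h e => h.ne (congrArg Subtype.val (Sum.inr_injective e))

/-- The blue vertices together with a maximal independent set of red vertices; if the red vertices
form a union of cliques, this is one representative of each red clique. -/
structure IsRedTransversal (G : SimpleGraph V) (red : V → Prop) (W : Set V) : Prop where
  blue_mem : ∀ b, ¬ red b → b ∈ W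
  not_adj : ∀ u v : W, red u → red v → ¬ G.Adj u v
  exists_eq_or_adj : ∀ v, red v → ∃ u : W, red u ∧ (u = v ∨ G.Adj u v)

lemma exists_isRedTransversal (G : SimpleGraph V) (red : V → Prop) :
    ∃ W, IsRedTransversal G red W := by
  obtain ⟨T, ⟨hTred, hTind⟩, hTmax⟩ : ∃ T, Maximal (fun T => T ⊆ {v | red v} ∧ G.IsIndepSet T) T :=
    zorn_subset _ fun c hc hchain =>
      ⟨⋃₀ c, ⟨Set.sUnion_subset fun _ hs => (hc hs).1,
        (Set.pairwise_sUnion hchain.directedOn).2 fun _ hs => (hc hs).2⟩,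
        fun _ => Set.subset_sUnion_of_mem⟩
  refine ⟨{v | red v → v ∈ T}, fun b hb h => absurd h hb,
    fun u v hu hv h => hTind (u.2 hu) (v.2 hv) (G.ne_of_adj h) h, fun v hv => ?_⟩
  suffices hdom : ∃ u ∈ T, u = v ∨ G.Adj u v by
    obtain ⟨u, hu, huv⟩ := hdom
    exact ⟨⟨u, fun _ => hu⟩, hTred hu, huv⟩
  by_contra! hfar
  have hinsert : G.IsIndepSet (insert v T) :=
    hTind.insert fun u hu _ => ⟨fun h => (hfar u hu).2 h.symm, (hfar u hu).2⟩
  have hvT : v ∈ T := hTmax ⟨Set.insert_subset hv hTred, hinsert⟩ (Set.subset_insert v T)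
    (Set.mem_insert v T)
  exact (hfar v hvT).1 rfl

lemma IsRedTransversal.eq_of_eq_or_adj {W : Set V} (hW : IsRedTransversal G red W)
    (hR : IsUnionOfCliques G {v | red v}) {u u' : {w : W // red w}} {x y : V} (hx : red x)
    (hy : red y) (hux : u = x ∨ G.Adj u x) (hu'y : u' = y ∨ G.Adj u' y)
    (hxy : x = y ∨ G.Adj x y) : u = u' := by
  have huu' : (u : V) = u' ∨ G.Adj u u' :=
    hR.eq_or_adj_trans u.2 hy u'.2 (hR.eq_or_adj_trans u.2 hx hy hux hxy)
      (hu'y.imp Eq.symm Adj.symm)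
  exact Subtype.ext (Subtype.ext (huu'.resolve_right (hW.not_adj u u' u.2 u'.2)))

/-- The graph which is blown up is the one induced on `W`. -/
lemma IsRedTransversal.isBlowUpOf_of_parametrization {W : Set V} (hW : IsRedTransversal G red W)
    {I : Type} (hI : 2 ≤ Cardinal.mk I) (hI' : Cardinal.mk I ≤ Cardinal.aleph0)
    {p : {w : W // red w} × I → V} (hinj : Function.Injective p)
    (hrange : Set.range p = {v | red v})
    (hclique : ∀ x y, G.Adj (p x) (p y) ↔ x.1 = y.1 ∧ x ≠ y)
    (hcross : ∀ x b, ¬ red b → (G.Adj (p x) b ↔ G.Adj x.1 b)) :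
    IsBlowUpOf G red := by
  let redW : W → Prop := fun w => red w
  have hpred : ∀ x, red (p x) := fun x => hrange.subset (Set.mem_range_self x)
  let g : {w // redW w} × I ⊕ {w // ¬ redW w} → V := Sum.elim p (fun b => b.1)
  have hg : Function.Bijective g := by
    constructor
    · exact hinj.sumElim (Subtype.val_injective.comp Subtype.val_injective) fun x b h =>
        b.2 (h ▸ hpred x : red b.1)
    · intro v
      by_cases hv : red v
      · obtain ⟨x, rfl⟩ := hrange.superset hv
        exact ⟨Sum.inl x, rfl⟩
      · exact ⟨Sum.inr ⟨⟨v, hW.blue_mem v hv⟩, hv⟩, rfl⟩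
  have hgadj : ∀ x y, G.Adj (g x) (g y) ↔ (blowUp (G.induce W) redW I).Adj x y := by
    rintro (x | b) (y | c)
    · rw [blowUp_adj_inl_inl hW.not_adj]
      exact hclique x y
    · rw [blowUp_adj_inl_inr]
      exact hcross x c c.2
    · rw [adj_comm, adj_comm (blowUp _ _ _), blowUp_adj_inl_inr]
      exact hcross y b b.2
    · rw [blowUp_adj_inr_inr]
      rfl
  let e : blowUp (G.induce W) redW I ≃g G := ⟨Equiv.ofBijective g hg, hgadj _ _⟩
  have he : ∀ x, red (e x) ↔ blowUpRed W redW I x := by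
    rintro (x | b)
    · exact iff_true_intro (hpred x)
    · exact iff_false_intro b.2
  exact ⟨W, G.induce W, redW, I, hW.not_adj, hI, hI', e.symm,
    fun v => by rw [← he, e.apply_symm_apply]⟩

/-- Some blue vertex is adjacent to exactly one end of some red edge. This is the property of graphs
that are not blow-ups which the argument uses, for both color classes. -/
def SeparatesRedEdge (G : SimpleGraph V) (red : V → Prop) : Prop :=
  ∃ x y b, red x ∧ red y ∧ ¬ red b ∧ G.Adj x y ∧ G.Adj x b ∧ ¬ G.Adj y b

lemma adj_iff_of_not_separatesRedEdge (hsep : ¬ SeparatesRedEdge G red) {u v b : V} (hu : red u)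
    (hv : red v) (hb : ¬ red b) (huv : u = v ∨ G.Adj u v) : G.Adj u b ↔ G.Adj v b := by
  rcases huv with rfl | huv
  · rfl
  constructor <;> intro h <;> by_contra h'
  · exact hsep ⟨u, v, b, hu, hv, hb, huv, h, h'⟩
  · exact hsep ⟨v, u, b, hv, hu, hb, huv.symm, h, h'⟩

/-- Automorphisms taking `r` to the representatives of the other red cliques identify all red
cliques with the clique `I` of `r`. -/
lemma isBlowUpOf_of_not_separatesRedEdge [Countable V] (hH : Ultrahomogeneous G red)
    (hR : IsUnionOfCliques G {v | red v}) (hedge : ∃ r s, red r ∧ red s ∧ G.Adj r s)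
    (hsep : ¬ SeparatesRedEdge G red) : IsBlowUpOf G red := by
  obtain ⟨r, s, hr, hs, hrs⟩ := hedge
  obtain ⟨W, hW⟩ := exists_isRedTransversal G red
  let I : Set V := {v | red v ∧ (r = v ∨ G.Adj r v)}
  have hmove : ∀ u : {w : W // red w}, ∃ ψ : G ≃g G, (∀ v, red (ψ v) ↔ red v) ∧ ψ r = u :=
    fun u => by
      simpa using hH.exists_iso_apply_eq (fun _ : Unit => r) (fun _ => (u : V)) (by simp)
        (by simp [hr, u.2]) (by simp)
  choose φ hφred hφr using hmove
  have hclose : ∀ u v, (u = φ u v ∨ G.Adj u (φ u v)) ↔ (r = v ∨ G.Adj r v) := fun u v => by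
    rw [← hφr u, (φ u).injective.eq_iff, (φ u).map_adj_iff]
  let p : {w : W // red w} × I → V := fun x => φ x.1 x.2
  have hpred : ∀ x, red (p x) := fun x => (hφred _ _).2 x.2.2.1
  have hpclose : ∀ x, x.1 = p x ∨ G.Adj x.1 (p x) := fun x => (hclose _ _).2 x.2.2.2
  have hfst : ∀ x y, p x = p y ∨ G.Adj (p x) (p y) → x.1 = y.1 := fun x y =>
    hW.eq_of_eq_or_adj hR (hpred x) (hpred y) (hpclose x) (hpclose y)
  have hinj : Function.Injective p := by
    rintro ⟨u, i⟩ ⟨u', i'⟩ h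
    obtain rfl : u = u' := hfst _ _ (Or.inl h)
    exact congrArg _ (Subtype.ext ((φ u).injective h))
  refine hW.isBlowUpOf_of_parametrization (I := I) ?_ Cardinal.mk_le_aleph0 hinj ?_ ?_ ?_
  · exact Cardinal.two_le_iff.2
      ⟨⟨r, hr, Or.inl rfl⟩, ⟨s, hs, Or.inr hrs⟩, fun h => hrs.ne (congrArg Subtype.val h)⟩
  · refine Set.Subset.antisymm (Set.range_subset_iff.2 hpred) fun v hv => ?_
    obtain ⟨u, hu, huv⟩ := hW.exists_eq_or_adj v hv
    obtain ⟨i, rfl⟩ := (φ ⟨u, hu⟩).surjective v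
    exact ⟨(⟨u, hu⟩, ⟨i, (hφred _ i).1 hv, (hclose ⟨u, hu⟩ _).1 huv⟩), rfl⟩
  · refine fun x y => ⟨fun h => ⟨hfst x y (Or.inr h), fun e => h.ne (congrArg p e)⟩, ?_⟩
    rintro ⟨h, hne⟩
    exact (hR.eq_or_adj_trans (hpred x) x.1.2 (hpred y) ((hpclose x).imp Eq.symm Adj.symm)
      (h ▸ hpclose y)).resolve_left (hinj.ne hne)
  · exact fun x b hb =>
      (adj_iff_of_not_separatesRedEdge hsep x.1.2 (hpred x) hb (hpclose x)).symm

/-! ### Neighborhoods of blue vertices in red cliques -/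

lemma SeparatesRedEdge.exists_adj_iff_not_adj (hsep : SeparatesRedEdge G red)
    (hH : Ultrahomogeneous G red) {u b : V} (hu : red u) (hb : ¬ red b) :
    ∃ v, red v ∧ G.Adj u v ∧ (G.Adj v b ↔ ¬ G.Adj u b) := by
  obtain ⟨x, y, c, hx, hy, hc, hxy, hxc, hyc⟩ := hsep
  have move : ∀ x y, red x → red y → G.Adj x y → (G.Adj u b ↔ G.Adj x c) →
      (G.Adj y c ↔ ¬ G.Adj x c) → ∃ v, red v ∧ G.Adj u v ∧ (G.Adj v b ↔ ¬ G.Adj u b) := by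
    intro x y hx hy hxy hxu hxy'
    obtain ⟨ψ, hψ, hψxc⟩ := hH.exists_iso_apply_eq ![x, c] ![u, b]
      (by simp [Fin.forall_fin_succ, ne_of_red_of_not_red hu hb, ne_of_red_of_not_red hx hc])
      (by simp [Fin.forall_fin_succ, hu, hb, hx, hc]) (by simpa [Fin.forall_fin_succ] using hxu)
    have hψx : ψ x = u := hψxc 0
    have hψc : ψ c = b := hψxc 1
    refine ⟨ψ y, (hψ y).2 hy, ?_, ?_⟩
    · rwa [← hψx, ψ.map_adj_iff]
    · rw [hxu, ← hψc, ψ.map_adj_iff, hxy']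
  by_cases hub : G.Adj u b
  · exact move x y hx hy hxy (by simp [hub, hxc]) (by simp [hxc, hyc])
  · exact move y x hy hx hxy.symm (by simp [hub, hyc]) (by simp [hxc, hyc])

lemma SeparatesRedEdge.exists_adj (hsep : SeparatesRedEdge G red)
    (hH : Ultrahomogeneous G red) {u b : V} (hu : red u) (hb : ¬ red b) :
    ∃ v, red v ∧ (u = v ∨ G.Adj u v) ∧ G.Adj v b := by
  by_cases hub : G.Adj u b
  · exact ⟨u, hu, Or.inl rfl, hub⟩
  · obtain ⟨v, hv, huv, hvb⟩ := hsep.exists_adj_iff_not_adj hH hu hb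
    exact ⟨v, hv, Or.inr huv, hvb.2 hub⟩

lemma adj_iff_of_not_realizes_Dgraph (hD : ¬ Realizes G red Dgraph Dred) {r s b c : V}
    (hr : red r) (hs : red s) (hb : ¬ red b) (hc : ¬ red c) (hrs : G.Adj r s) (hbc : G.Adj b c)
    (hrb : G.Adj r b) (hrc : G.Adj r c) : G.Adj s b ↔ G.Adj s c := by
  have himp : ∀ {b c}, ¬ red b → ¬ red c → G.Adj b c → G.Adj r b → G.Adj r c →
      G.Adj s b → G.Adj s c := by
    intro b c hb hc hbc hrb hrc hsb
    by_contra hsc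
    refine hD ⟨![r, s, b, c], ?_, ?_, ?_⟩
    · have hne {u v : V} (hu : red u) (hv : ¬ red v) : u ≠ v ∧ v ≠ u :=
        ⟨ne_of_red_of_not_red hu hv, (ne_of_red_of_not_red hu hv).symm⟩
      simp [Function.Injective, Fin.forall_fin_succ, hrs.ne, hrs.ne', hbc.ne, hbc.ne', hne hr hb,
        hne hr hc, hne hs hb, hne hs hc]
    · intro i
      fin_cases i <;> simp [Dred, *]
    · intro i j
      fin_cases i <;> fin_cases j <;> simp [Dgraph, *, G.adj_comm]
  exact ⟨himp hb hc hbc hrb hrc, himp hc hb hbc.symm hrc hrb⟩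

/-- A red neighbor `w` of `v` that misses `c` also misses `d`, because `D` is omitted; hence
`(w, c, d)` can be moved to `(a, b₁, b₂)`. -/
lemma exists_red_adj_adj_adj (hH : Ultrahomogeneous G red)
    (hsep : SeparatesRedEdge G red) (hD : ¬ Realizes G red Dgraph Dred) {v c d a b₁ b₂ : V}
    (hv : red v) (hc : ¬ red c) (hd : ¬ red d) (hcd : G.Adj c d) (hvc : G.Adj v c)
    (hvd : G.Adj v d) (ha : red a) (hb₁ : ¬ red b₁) (hb₂ : ¬ red b₂) (hb : G.Adj b₁ b₂)
    (hab₁ : ¬ G.Adj a b₁) (hab₂ : ¬ G.Adj a b₂) :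
    ∃ w, red w ∧ G.Adj a w ∧ G.Adj w b₁ ∧ G.Adj w b₂ := by
  obtain ⟨w, hw, hvw, hwc⟩ := hsep.exists_adj_iff_not_adj hH hv hc
  have hwc : ¬ G.Adj w c := by simpa [hvc] using hwc
  have hwd : ¬ G.Adj w d :=
    (adj_iff_of_not_realizes_Dgraph hD hv hw hc hd hvw hcd hvc hvd).not.1 hwc
  obtain ⟨ψ, hψ, hψwcd⟩ := hH.exists_iso_apply_eq ![w, c, d] ![a, b₁, b₂]
    (by simp [Fin.forall_fin_succ, ne_of_red_of_not_red ha, ne_of_red_of_not_red hw, hb.ne,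
      hcd.ne, hb₁, hb₂, hc, hd])
    (by simp [Fin.forall_fin_succ, ha, hw, hb₁, hb₂, hc, hd])
    (by simp [Fin.forall_fin_succ, hab₁, hab₂, hwc, hwd, hb, hcd])
  have hψw : ψ w = a := hψwcd 0
  have hψc : ψ c = b₁ := hψwcd 1
  have hψd : ψ d = b₂ := hψwcd 2
  refine ⟨ψ v, (hψ v).2 hv, ?_, ?_, ?_⟩
  · rwa [← hψw, ψ.map_adj_iff, adj_comm]
  · rwa [← hψc, ψ.map_adj_iff]
  · rwa [← hψd, ψ.map_adj_iff]

/-- If every red vertex had at most one neighbor in each blue clique, then an automorphism fixing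
`r` and `b₃` would fix the neighbor `b₁` of `r`, so it could not move a neighbor `s` of `b₁` to a
neighbor `t` of `b₂`; but it can do so when `s` and `t` lie outside the red clique of `r`. -/
lemma exists_red_adj_adj_of_blue_triangle (hH : Ultrahomogeneous G red)
    (hR : IsUnionOfCliques G {v | red v}) (hB : IsUnionOfCliques G {v | ¬ red v})
    (hsep : SeparatesRedEdge G red) {p q : V} (hp : red p) (hq : red q) (hpq : p ≠ q)
    (hpq' : ¬ G.Adj p q) {b₁ b₂ b₃ : V} (hb₁ : ¬ red b₁) (hb₂ : ¬ red b₂) (hb₃ : ¬ red b₃)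
    (h₁₂ : G.Adj b₁ b₂) (h₁₃ : G.Adj b₁ b₃) (h₂₃ : G.Adj b₂ b₃) :
    ∃ v c d, red v ∧ ¬ red c ∧ ¬ red d ∧ G.Adj c d ∧ G.Adj v c ∧ G.Adj v d := by
  by_contra! hunique
  obtain ⟨r, hr, hpr, hr₁⟩ := hsep.exists_adj hH hp hb₁
  obtain ⟨s, hs, hqs, hs₁⟩ := hsep.exists_adj hH hq hb₁
  obtain ⟨t, ht, hqt, ht₂⟩ := hsep.exists_adj hH hq hb₂
  have hfar : ∀ v, red v → (q = v ∨ G.Adj q v) → r ≠ v ∧ ¬ G.Adj r v := by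
    intro v hv hqv
    rw [← not_or]
    intro hrv
    exact not_or.2 ⟨hpq, hpq'⟩ <| hR.eq_or_adj_trans hp hv hq
      (hR.eq_or_adj_trans hp hr hv hpr hrv) (hqv.imp Eq.symm Adj.symm)
  obtain ⟨hrs, hrs'⟩ := hfar s hs hqs
  obtain ⟨hrt, hrt'⟩ := hfar t ht hqt
  have hs₃ : ¬ G.Adj s b₃ := hunique s b₁ b₃ hs hb₁ hb₃ h₁₃ hs₁
  have ht₃ : ¬ G.Adj t b₃ := hunique t b₂ b₃ ht hb₂ hb₃ h₂₃ ht₂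
  obtain ⟨ψ, hψ, hψrsb⟩ := hH.exists_iso_apply_eq ![r, s, b₃] ![r, t, b₃]
    (by simp [Fin.forall_fin_succ, ne_of_red_of_not_red hr hb₃, ne_of_red_of_not_red hs hb₃,
      ne_of_red_of_not_red ht hb₃, hrs, hrt])
    (by simp [Fin.forall_fin_succ, hs, ht]) (by simp [Fin.forall_fin_succ, hrs', hrt', hs₃, ht₃])
  have hψr : ψ r = r := hψrsb 0
  have hψs : ψ s = t := hψrsb 1
  have hψb₃ : ψ b₃ = b₃ := hψrsb 2
  have hψb₁ : ¬ red (ψ b₁) := (hψ b₁).not.2 hb₁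
  have hrψ : G.Adj r (ψ b₁) := by rwa [← hψr, ψ.map_adj_iff]
  have htψ : G.Adj t (ψ b₁) := by rwa [← hψs, ψ.map_adj_iff]
  have hψ₃ : G.Adj (ψ b₁) b₃ := by rwa [← hψb₃, ψ.map_adj_iff]
  rcases hB.eq_or_adj_trans hb₁ hb₃ hψb₁ (Or.inr h₁₃) (Or.inr hψ₃.symm) with hfix | hadj
  · exact hunique t b₁ b₂ ht hb₁ hb₂ h₁₂ (hfix ▸ htψ) ht₂
  · exact hunique r b₁ (ψ b₁) hr hb₁ hψb₁ hadj hr₁ hrψ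

lemma not_adj_iff_of_not_adj_iff (hH : Ultrahomogeneous G red)
    (hR : IsUnionOfCliques G {v | red v}) (hB : IsUnionOfCliques G {v | ¬ red v})
    (hsepR : SeparatesRedEdge G red) (hsepB : SeparatesRedEdge G (fun v => ¬ red v))
    (hα : ∃ u v, red u ∧ red v ∧ u ≠ v ∧ ¬ G.Adj u v) (hD : ¬ Realizes G red Dgraph Dred)
    {r a b c : V} (hr : red r) (ha : red a) (hra : G.Adj r a) (hb : ¬ red b) (hc : ¬ red c)
    (hbc : G.Adj b c) (hrbc : ¬ (G.Adj r b ↔ G.Adj r c)) : ¬ (G.Adj a b ↔ G.Adj a c) := by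
  have hcommon : ∀ v, red v → (v = r ∨ G.Adj v r) → G.Adj v b → ¬ G.Adj v c := by
    rintro v hv (rfl | hvr) hvb hvc
    · exact hrbc (iff_of_true hvb hvc)
    · exact hrbc (adj_iff_of_not_realizes_Dgraph hD hv hr hb hc hvr hbc hvb hvc)
  intro habc
  by_cases hab : G.Adj a b
  · exact hcommon a ha (Or.inr hra.symm) hab (habc.1 hab)
  have hac : ¬ G.Adj a c := habc.not.1 hab
  obtain ⟨d, hd, hbd, hda⟩ := hsepB.exists_adj hH.swap_colors hb (not_not.2 ha)
  have hbd : G.Adj b d := hbd.resolve_left fun h => hab (h ▸ hda.symm)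
  have hcd : G.Adj c d := by
    refine hB c hc b hb d hd hbc.symm hbd fun h => hac (h ▸ hda.symm)
  obtain ⟨p, q, hp, hq, hpq, hpq'⟩ := hα
  obtain ⟨v, x, y, hv, hx, hy, hxy, hvx, hvy⟩ := exists_red_adj_adj_of_blue_triangle hH hR hB
    hsepR hp hq hpq hpq' hb hc hd hbc hbd hcd
  obtain ⟨w, hw, haw, hwb, hwc⟩ := exists_red_adj_adj_adj hH hsepR hD hv hx hy hxy hvx
    hvy ha hb hc hbc hab hac
  exact hcommon w hw
    (hR.eq_or_adj_trans hw ha hr (Or.inr haw.symm) (Or.inr hra.symm)) hwb hwc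

lemma IsMaxCliqueIn.separatesRedEdge [Countable V] (hH : Ultrahomogeneous G red)
    (hR : IsUnionOfCliques G {v | red v}) (hblow : ¬ IsBlowUpOf G red) {M : Set V}
    (hM : IsMaxCliqueIn G {v | red v} M) (hM' : M.Nontrivial) : SeparatesRedEdge G red := by
  obtain ⟨r, hr, s, hs, hrs⟩ := hM'
  by_contra hsep
  exact hblow <| isBlowUpOf_of_not_separatesRedEdge hH hR
    ⟨r, s, hM.1 hr, hM.1 hs, hM.2.1 hr hs hrs⟩ hsep

lemma IsMaxCliqueIn.inter_nonempty_and_sdiff_nonempty (hH : Ultrahomogeneous G red)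
    (hR : IsUnionOfCliques G {v | red v}) (hsep : SeparatesRedEdge G red) {M : Set V}
    (hM : IsMaxCliqueIn G {v | red v} M) {b : V} (hb : ¬ red b) :
    (M ∩ G.neighborSet b).Nonempty ∧ (M \ G.neighborSet b).Nonempty := by
  obtain ⟨u, hu⟩ : M.Nonempty := hM.nonempty (hsep.imp fun _ ⟨_, _, hx, _⟩ => hx)
  obtain ⟨v, hv, huv, hvb⟩ := hsep.exists_adj_iff_not_adj hH (hM.1 hu) hb
  have hvM : v ∈ M := hM.mem_of_adj hR hu hv huv
  simp only [G.adj_comm _ b] at hvb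
  by_cases hub : G.Adj b u
  · exact ⟨⟨u, hu, hub⟩, v, hvM, fun h => hvb.1 h hub⟩
  · exact ⟨⟨v, hvM, hvb.2 hub⟩, u, hu, hub⟩

lemma IsMaxCliqueIn.adj_iff_or_adj_iff_not [Countable V] (hH : Ultrahomogeneous G red)
    (hR : IsUnionOfCliques G {v | red v}) (hB : IsUnionOfCliques G {v | ¬ red v})
    (hblow : ¬ IsBlowUp G red) (hα : ∃ u v, red u ∧ red v ∧ u ≠ v ∧ ¬ G.Adj u v)
    (hD : ¬ Realizes G red Dgraph Dred) {MR MB : Set V} (hMR : IsMaxCliqueIn G {v | red v} MR)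
    (hMB : IsMaxCliqueIn G {v | ¬ red v} MB) {b c : V} (hb : b ∈ MB) (hc : c ∈ MB) :
    (∀ u ∈ MR, G.Adj b u ↔ G.Adj c u) ∨ ∀ u ∈ MR, G.Adj b u ↔ ¬ G.Adj c u := by
  simp only [G.adj_comm b, G.adj_comm c]
  by_contra! ⟨⟨r, hr, hrbc⟩, a, ha, habc⟩
  replace hrbc : ¬ (G.Adj r b ↔ G.Adj r c) := by tauto
  replace habc : G.Adj a b ↔ G.Adj a c := by tauto
  have hra : r ≠ a := fun h => hrbc (h ▸ habc)
  have hbc : b ≠ c := fun h => hrbc (h ▸ Iff.rfl)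
  have hsepR : SeparatesRedEdge G red :=
    hMR.separatesRedEdge hH hR (fun h => hblow (Or.inl h)) ⟨r, hr, a, ha, hra⟩
  have hsepB : SeparatesRedEdge G (fun v => ¬ red v) :=
    hMB.separatesRedEdge hH.swap_colors hB (fun h => hblow (Or.inr h)) ⟨b, hb, c, hc, hbc⟩
  exact not_adj_iff_of_not_adj_iff hH hR hB hsepR hsepB hα hD (hMR.1 hr) (hMR.1 ha)
    (hMR.2.1 hr ha hra) (hMB.1 hb) (hMB.1 hc) (hMB.2.1 hb hc hbc) hrbc habc

theorem stmt_11_general [Countable V] (hH : Ultrahomogeneous G red)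
    (hR : IsUnionOfCliques G {v | red v}) (hB : IsUnionOfCliques G {v | ¬ red v})
    (hblow : ¬ IsBlowUp G red) (hα : ∃ u v, red u ∧ red v ∧ u ≠ v ∧ ¬ G.Adj u v)
    (hD : ¬ Realizes G red Dgraph Dred) {MR MB : Set V} (hMR : IsMaxCliqueIn G {v | red v} MR)
    (hMB : IsMaxCliqueIn G {v | ¬ red v} MB) :
    (MR.Nontrivial →
      ∃ R1 R2 : Set V, R1.Nonempty ∧ R2.Nonempty ∧ R1 ∪ R2 = MR ∧ Disjoint R1 R2 ∧
        ∀ b ∈ MB, {u | u ∈ MR ∧ G.Adj b u} = R1 ∨ {u | u ∈ MR ∧ G.Adj b u} = R2) ∧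
    (MR.Nontrivial → MB.Nontrivial →
      ∃ R1 R2 B1 B2 : Set V, R1.Nonempty ∧ R2.Nonempty ∧ B1.Nonempty ∧ B2.Nonempty ∧
        R1 ∪ R2 = MR ∧ Disjoint R1 R2 ∧ B1 ∪ B2 = MB ∧ Disjoint B1 B2 ∧
        ∀ r ∈ MR, ∀ b ∈ MB,
          (G.Adj r b ↔ ((r ∈ R1 ∧ b ∈ B1) ∨ (r ∈ R2 ∧ b ∈ B2)))) := by
  have hsplitR : MR.Nontrivial →
      ∃ c ∈ MB, (MR ∩ G.neighborSet c).Nonempty ∧ (MR \ G.neighborSet c).Nonempty := fun h => by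
    have hsep := hMR.separatesRedEdge hH hR (fun h => hblow (Or.inl h)) h
    obtain ⟨c, hc⟩ : MB.Nonempty := hMB.nonempty (hsep.elim fun _ ⟨_, b, _, _, hb, _⟩ => ⟨b, hb⟩)
    exact ⟨c, hc, hMR.inter_nonempty_and_sdiff_nonempty hH hR hsep (hMB.1 hc)⟩
  have hdich {b c : V} (hb : b ∈ MB) (hc : c ∈ MB) :=
    hMR.adj_iff_or_adj_iff_not hH hR hB hblow hα hD hMB hb hc
  refine ⟨fun hMR' => ?_, fun hMR' hMB' => ?_⟩ <;> obtain ⟨c, hc, hadj, hnot⟩ := hsplitR hMR'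
  · exact ⟨_, _, hadj, hnot, Set.inter_union_sdiff _ _, disjoint_inf_sdiff, fun b hb =>
      (hdich hb hc).imp (fun h => Set.ext fun u => and_congr_right (h u))
        (fun h => Set.ext fun u => and_congr_right (h u))⟩
  · obtain ⟨r, hr, hcr⟩ := hadj
    have hsepB := hMB.separatesRedEdge hH.swap_colors hB (fun h => hblow (Or.inr h)) hMB'
    obtain ⟨hadjB, hnotB⟩ :=
      hMB.inter_nonempty_and_sdiff_nonempty hH.swap_colors hB hsepB (not_not.2 (hMR.1 hr))
    refine ⟨MR ∩ G.neighborSet c, MR \ G.neighborSet c, MB ∩ G.neighborSet r,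
      MB \ G.neighborSet r, ⟨r, hr, hcr⟩, hnot, hadjB, hnotB, Set.inter_union_sdiff _ _,
      disjoint_inf_sdiff, Set.inter_union_sdiff _ _, disjoint_inf_sdiff, fun u hu b hb => ?_⟩
    simp only [mem_neighborSet, Set.mem_inter_iff, Set.mem_sdiff, hu, hb, true_and,
      G.adj_comm u b, G.adj_comm r b] at hcr ⊢
    rcases hdich hb hc with h | h <;> simp [h u hu, h r hr, hcr]

/-- partitions induced by neighborhoods in a basic CUH graph omitting `D`
with a non-independent color class. -/
theorem stmt_11 {V : Type} (G : SimpleGraph V) (red : V → Prop)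
    (hG : IsBasicCUH G red)
    (hOmD : ¬ Realizes G red Dgraph Dred)
    (hni : (∃ u v, red u ∧ red v ∧ G.Adj u v) ∨ (∃ u v, ¬ red u ∧ ¬ red v ∧ G.Adj u v))
    (MR MB : Set V) (hMR : IsMaxCliqueIn G {v | red v} MR)
    (hMB : IsMaxCliqueIn G {v | ¬ red v} MB) :
    ((∀ M : Set V, IsMaxCliqueIn G {v | red v} M → 1 < Cardinal.mk M) →
      ∃ R1 R2 : Set V, R1.Nonempty ∧ R2.Nonempty ∧ R1 ∪ R2 = MR ∧ Disjoint R1 R2 ∧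
        ∀ b ∈ MB, {u | u ∈ MR ∧ G.Adj b u} = R1 ∨ {u | u ∈ MR ∧ G.Adj b u} = R2) ∧
    ((∀ M : Set V, IsMaxCliqueIn G {v | red v} M → 1 < Cardinal.mk M) →
     (∀ M : Set V, IsMaxCliqueIn G {v | ¬ red v} M → 1 < Cardinal.mk M) →
      ∃ R1 R2 B1 B2 : Set V, R1.Nonempty ∧ R2.Nonempty ∧ B1.Nonempty ∧ B2.Nonempty ∧
        R1 ∪ R2 = MR ∧ Disjoint R1 R2 ∧ B1 ∪ B2 = MB ∧ Disjoint B1 B2 ∧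
        ∀ r ∈ MR, ∀ b ∈ MB,
          (G.Adj r b ↔ ((r ∈ R1 ∧ b ∈ B1) ∨ (r ∈ R2 ∧ b ∈ B2)))) := by
  have ⟨⟨_, _, hH, hR, hB⟩, hblow, hα, _⟩ := hG
  have nontrivial {M : Set V} (h : 1 < Cardinal.mk M) : M.Nontrivial :=
    Set.nontrivial_coe_sort.1 (Cardinal.one_lt_iff_nontrivial.1 h)
  exact (stmt_11_general hH hR hB hblow hα hOmD hMR hMB).imp
    (fun h hωR => h (nontrivial (hωR MR hMR)))
    fun h hωR hωB => h (nontrivial (hωR MR hMR)) (nontrivial (hωB MB hMB))
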